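/- Let n ≥ 2 be an integer. There exists R₀ > 0 such that for all R ≥ R₀ the angle θ_R is strictly decreasing as long as the curve stays strictly below the diagonal and the total turning is less than π: precisely, θ_R'(t) < 0 for every t ∈ [0, T_R) such that θ_R(τ) > −5π/4 for all τ ∈ [0, t] and x_R(τ) > y_R(τ) for all τ ∈ (0, t]. -/

import Mathlib

/-- The shooting solution of the self-shrinker profile system (with `m = n`) on `[0, T)`:
`x' = cos θ`, `y' = sin θ`, `θ' = (x/2 − (n−1)/x)·sin θ + ((n−1)/y − y/2)·cos θ`,
with `x, y > 0`, and initial conditions `x 0 = y 0 = R/√2`, `θ 0 = −π/4`. -/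
def ShootingSol (n : ℕ) (R T : ℝ) (x y θ : ℝ → ℝ) : Prop :=
  0 < T ∧ x 0 = R / Real.sqrt 2 ∧ y 0 = R / Real.sqrt 2 ∧ θ 0 = -(Real.pi / 4) ∧
  ∀ t ∈ Set.Ico 0 T, 0 < x t ∧ 0 < y t ∧
    HasDerivAt x (Real.cos (θ t)) t ∧ HasDerivAt y (Real.sin (θ t)) t ∧
    HasDerivAt θ ((x t / 2 - ((n : ℝ) - 1) / x t) * Real.sin (θ t)
      + (((n : ℝ) - 1) / y t - y t / 2) * Real.cos (θ t)) t

/-!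
Suppose the angle stops decreasing, and consider the first time `b` at which `θ' = 0`. Up to `b`
the curve is a convex arc, and three things can happen there.

* If `-π/2 ≤ θ b`, both coordinates are still large, and then `θ' < 0`.
* If `-π < θ b < -π/2`, differentiating the equation at a zero of `θ'` gives
  `θ'' = a (1/x² - 1/y²) sin θ cos θ < 0` since `y < x`, although `θ'` has just increased to `0`.
* If `θ b ≤ -π`, let `t` be the time with `θ t = -π`. A curve starting at `(q, q)` keeps
  `0 ≤ x - y = O(1/q)` up to time `t`, and such a curve cannot turn to the horizontal outside the
  cylinder radius, so that `x t < √(2a)`. Afterwards `x` decreases, so at time `b` both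
  coordinates are below `√(2a)`, where again `θ' < 0`.

In the rotated frame the relevant quantities are `x + y`, `x - y` and their derivatives
`cos θ + sin θ`, `cos θ - sin θ`.
-/

open Real Set

section Calculus

variable {f f' g g' : ℝ → ℝ} {a b : ℝ}

theorem antitoneOn_of_hasDerivAt_nonpos {s : Set ℝ} (hs : Convex ℝ s)
    (hf : ∀ t ∈ s, HasDerivAt f (f' t) t) (hf' : ∀ t ∈ interior s, f' t ≤ 0) :
    AntitoneOn f s :=
  antitoneOn_of_hasDerivWithinAt_nonpos hs (HasDerivAt.continuousOn hf)
    (fun t ht => (hf t (interior_subset ht)).hasDerivWithinAt) hf'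

theorem monotoneOn_of_hasDerivAt_nonneg {s : Set ℝ} (hs : Convex ℝ s)
    (hf : ∀ t ∈ s, HasDerivAt f (f' t) t) (hf' : ∀ t ∈ interior s, 0 ≤ f' t) :
    MonotoneOn f s :=
  monotoneOn_of_hasDerivWithinAt_nonneg hs (HasDerivAt.continuousOn hf)
    (fun t ht => (hf t (interior_subset ht)).hasDerivWithinAt) hf'

theorem le_of_deriv_lt_of_eq (hf : ∀ t ∈ Icc a b, HasDerivAt f (f' t) t)
    (hg : ∀ t ∈ Icc a b, HasDerivAt g (g' t) t) (hfg : f a ≤ g a)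
    (hlt : ∀ t ∈ Ico a b, f t = g t → f' t < g' t) {t : ℝ} (ht : t ∈ Icc a b) : f t ≤ g t :=
  image_le_of_deriv_right_lt_deriv_boundary' (HasDerivAt.continuousOn hf)
    (fun t ht => (hf t (Ico_subset_Icc_self ht)).hasDerivWithinAt) hfg
    (HasDerivAt.continuousOn hg)
    (fun t ht => (hg t (Ico_subset_Icc_self ht)).hasDerivWithinAt) hlt ht

theorem exists_first_zero (hab : a ≤ b) (hf : ContinuousOn f (Icc a b)) (hfa : f a < 0)
    (hfb : 0 ≤ f b) : ∃ c ∈ Ioc a b, f c = 0 ∧ ∀ t ∈ Ico a c, f t < 0 := by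
  have hzero : ∀ t ∈ Icc a b, 0 ≤ f t → ∃ s ∈ Icc a t, f s = 0 := fun t ht hft =>
    intermediate_value_Icc ht.1 (hf.mono (Icc_subset_Icc_right ht.2)) ⟨hfa.le, hft⟩
  have hcompact : IsCompact (Icc a b ∩ f ⁻¹' {0}) :=
    isCompact_Icc.of_isClosed_subset
      (hf.preimage_isClosed_of_isClosed isClosed_Icc isClosed_singleton) inter_subset_left
  obtain ⟨c, ⟨hc, hfc⟩, hleast⟩ :=
    hcompact.exists_isLeast (hzero b (right_mem_Icc.2 hab) hfb)
  refine ⟨c, ⟨hc.1.lt_of_ne ?_, hc.2⟩, hfc, fun t ht => ?_⟩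
  · rintro rfl
    exact hfa.ne hfc
  · by_contra! hft
    have htb : t ≤ b := ht.2.le.trans hc.2
    obtain ⟨s, hs, hfs⟩ := hzero t ⟨ht.1, htb⟩ hft
    exact (hs.2.trans_lt ht.2).not_ge (hleast ⟨⟨hs.1, hs.2.trans htb⟩, hfs⟩)

theorem deriv_nonneg_of_le_on_left {f' : ℝ} (hab : a < b) (hf : HasDerivAt f f' b)
    (hle : ∀ t ∈ Ioo a b, f t ≤ f b) : 0 ≤ f' := by
  have hslope := (hasDerivAt_iff_tendsto_slope.1 hf).mono_left
    (nhdsWithin_mono b (show Iio b ⊆ {b}ᶜ from fun _ ht => ne_of_lt ht))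
  refine ge_of_tendsto hslope ?_
  filter_upwards [Ioo_mem_nhdsLT hab] with t ht
  rw [slope_def_field]
  exact div_nonneg_of_nonpos (sub_nonpos.2 (hle t ht)) (sub_nonpos.2 ht.2.le)

/- The left-hand side is the cross product of the displacement from time `s` with the tangent at
time `s`; its derivative in `t` is `sin (θ s - θ t)`. -/
theorem tangent_cross_nonneg {x y θ : ℝ → ℝ} {I : Set ℝ} (hI : I.OrdConnected)
    (hx : ∀ t ∈ I, HasDerivAt x (cos (θ t)) t) (hy : ∀ t ∈ I, HasDerivAt y (sin (θ t)) t)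
    (hθ : AntitoneOn θ I) (hturn : ∀ s ∈ I, ∀ t ∈ I, θ s - θ t ≤ π) {s t : ℝ} (hs : s ∈ I)
    (ht : t ∈ I) : 0 ≤ (x t - x s) * sin (θ s) - (y t - y s) * cos (θ s) := by
  let c : ℝ → ℝ := fun u => (x u - x s) * sin (θ s) - (y u - y s) * cos (θ s)
  have hc : ∀ u ∈ I, HasDerivAt c (sin (θ s - θ u)) u := fun u hu =>
    ((((hx u hu).sub_const _).mul_const _).sub
      (((hy u hu).sub_const _).mul_const _)).congr_deriv (by rw [sin_sub]; ring)
  have hcs : c s = 0 := by simp only [c]; ring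
  rw [← hcs]
  rcases le_total s t with hst | hts
  · have hsub : Icc s t ⊆ I := hI.out hs ht
    refine monotoneOn_of_hasDerivAt_nonneg (convex_Icc s t) (fun u hu => hc u (hsub hu))
      (fun u hu => ?_) (left_mem_Icc.2 hst) (right_mem_Icc.2 hst) hst
    have hu' := interior_subset hu
    exact sin_nonneg_of_nonneg_of_le_pi (sub_nonneg.2 (hθ hs (hsub hu') hu'.1))
      (hturn s hs u (hsub hu'))
  · have hsub : Icc t s ⊆ I := hI.out ht hs
    refine antitoneOn_of_hasDerivAt_nonpos (convex_Icc t s) (fun u hu => hc u (hsub hu))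
      (fun u hu => ?_) (left_mem_Icc.2 hts) (right_mem_Icc.2 hts) hts
    have hu' := interior_subset hu
    exact sin_nonpos_of_nonpos_of_neg_pi_le (sub_nonpos.2 (hθ (hsub hu') hs hu'.2))
      (by linarith [hturn u (hsub hu') s hs])

end Calculus

theorem neg_cos_add_sin_le (θ : ℝ) : -(cos θ + sin θ) ≤ 3 / 2 := by
  nlinarith [sin_sq_add_cos_sq θ, sq_nonneg (cos θ - sin θ)]

theorem cos_add_sin_nonpos {θ : ℝ} (h₁ : -π ≤ θ) (h₂ : θ ≤ -(π / 4)) :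
    cos θ + sin θ ≤ 0 := by
  have h : sin (θ + π / 4) ≤ 0 :=
    sin_nonpos_of_nonpos_of_neg_pi_le (by linarith) (by linarith [pi_pos])
  rw [sin_add, cos_pi_div_four, sin_pi_div_four, ← add_mul] at h
  linarith [nonpos_of_mul_nonpos_left h (by positivity)]

theorem cos_nonpos_of_le_neg_pi_div_two {θ : ℝ} (h₁ : -(3 * π / 2) ≤ θ) (h₂ : θ ≤ -(π / 2)) :
    cos θ ≤ 0 := by
  rw [← cos_neg]
  exact cos_nonpos_of_pi_div_two_le_of_le (by linarith) (by linarith)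

section AngleRate

/-- The right-hand side of the angle equation, i.e. the curvature at `(x, y)` of the profile curve
with tangent angle `θ`. The real parameter `a` stands for `n - 1`. -/
noncomputable def angleRate (a x y θ : ℝ) : ℝ :=
  (x / 2 - a / x) * sin θ + (a / y - y / 2) * cos θ

variable {a x y θ : ℝ}

theorem angleRate_eq_rotated (hx : x ≠ 0) (hy : y ≠ 0) :
    angleRate a x y θ =
      -((x + y) * (cos θ - sin θ) / 4) * (1 - 2 * (a / (x * y))) +
        (x - y) * (cos θ + sin θ) / 4 * (1 + 2 * (a / (x * y))) := by
  rw [angleRate]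
  field_simp
  ring

theorem angleRate_neg_of_two_mul_lt_sq (hx : 0 < x) (hy : 0 < y) (hax : 2 * a < x ^ 2)
    (hay : 2 * a < y ^ 2) (hsin : sin θ < 0) (hcos : 0 ≤ cos θ) : angleRate a x y θ < 0 := by
  have hx' : 0 < x / 2 - a / x := by
    rw [sub_pos, div_lt_iff₀ hx]; linarith
  have hy' : a / y - y / 2 < 0 := by
    rw [sub_neg, div_lt_iff₀ hy]; linarith
  exact add_neg_of_neg_of_nonpos (mul_neg_of_pos_of_neg hx' hsin)
    (mul_nonpos_of_nonpos_of_nonneg hy'.le hcos)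

theorem angleRate_neg_of_sq_lt_two_mul (hx : 0 < x) (hy : 0 < y) (hax : x ^ 2 < 2 * a)
    (hay : y ^ 2 < 2 * a) (hsin : 0 ≤ sin θ) (hcos : cos θ ≤ 0) : angleRate a x y θ < 0 := by
  have hx' : x / 2 - a / x < 0 := by
    rw [sub_neg, lt_div_iff₀ hx]; linarith
  have hy' : 0 < a / y - y / 2 := by
    rw [sub_pos, lt_div_iff₀ hy]; linarith
  rcases hcos.eq_or_lt with hcos | hcos
  · have hsin' : 0 < sin θ := hsin.lt_of_ne' fun h => by
      simpa [h, hcos] using sin_sq_add_cos_sq θ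
    rw [angleRate, hcos, mul_zero, add_zero]
    exact mul_neg_of_neg_of_pos hx' hsin'
  · exact add_neg_of_nonpos_of_neg (mul_nonpos_of_nonpos_of_nonneg hx'.le hsin)
      (mul_neg_of_pos_of_neg hy' hcos)

theorem angleRate_le (ha : 0 ≤ a) (hy : 0 < y) (hyx : y ≤ x) (haxy : 4 * a ≤ x * y)
    (hadd : cos θ + sin θ ≤ 0) (hsub : 0 ≤ cos θ - sin θ) :
    angleRate a x y θ ≤ -((x + y) * (cos θ - sin θ) / 8) := by
  have hx : 0 < x := hy.trans_le hyx
  have hz : a / (x * y) ≤ 1 / 4 := by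
    rw [div_le_iff₀ (by positivity)]; linarith
  have hfirst : (x + y) * (cos θ - sin θ) / 4 * (1 / 2) ≤
      (x + y) * (cos θ - sin θ) / 4 * (1 - 2 * (a / (x * y))) := by
    gcongr
    linarith
  have hsecond : (x - y) * (cos θ + sin θ) / 4 * (1 + 2 * (a / (x * y))) ≤ 0 :=
    mul_nonpos_of_nonpos_of_nonneg
      (by linarith [mul_nonpos_of_nonneg_of_nonpos (sub_nonneg.2 hyx) hadd]) (by positivity)
  rw [angleRate_eq_rotated hx.ne' hy.ne']
  linarith

theorem add_mul_sin_sub_cos_le (ha : 0 ≤ a) (hy : 0 < y) (hyx : y ≤ x)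
    (haxy : 4 * a ≤ x * y) (hsub : cos θ ≤ sin θ) (hrate : angleRate a x y θ ≤ 0) :
    (x + y) * (sin θ - cos θ) ≤ 9 / 2 * (x - y) := by
  have hx : 0 < x := hy.trans_le hyx
  have hz : a / (x * y) ≤ 1 / 4 := by
    rw [div_le_iff₀ (by positivity)]; linarith
  have hz₀ : 0 ≤ a / (x * y) := by positivity
  have hN : 0 ≤ sin θ - cos θ := sub_nonneg.2 hsub
  have hD : 0 ≤ x - y := sub_nonneg.2 hyx
  have hfirst : (x + y) * (sin θ - cos θ) / 4 * (1 / 2) ≤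
      (x + y) * (sin θ - cos θ) / 4 * (1 - 2 * (a / (x * y))) := by
    gcongr
    linarith
  have hsecond : (x - y) * -(cos θ + sin θ) / 4 * (1 + 2 * (a / (x * y))) ≤
      (x - y) * (3 / 2) / 4 * (1 + 2 * (1 / 4)) := by
    gcongr
    exact neg_cos_add_sin_le θ
  rw [angleRate_eq_rotated hx.ne' hy.ne'] at hrate
  linarith

theorem neg_angleRate_le (ha : 0 ≤ a) (hy : 0 < y) (hyx : y ≤ x) (haxy : a ≤ x * y)
    (hsub : cos θ ≤ sin θ) :
    -angleRate a x y θ ≤ (x + y) * (sin θ - cos θ) / 4 + 9 / 8 * (x - y) := by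
  have hx : 0 < x := hy.trans_le hyx
  have hz : a / (x * y) ≤ 1 := by
    rw [div_le_one (by positivity)]; exact haxy
  have : 0 ≤ sin θ - cos θ := sub_nonneg.2 hsub
  have : 0 ≤ x - y := sub_nonneg.2 hyx
  have hfirst : (x + y) * (sin θ - cos θ) / 4 * (2 * (a / (x * y)) - 1) ≤
      (x + y) * (sin θ - cos θ) / 4 * 1 := by
    gcongr
    linarith
  have hsecond : (x - y) * -(cos θ + sin θ) / 4 * (1 + 2 * (a / (x * y))) ≤
      (x - y) * (3 / 2) / 4 * (1 + 2 * 1) := by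
    gcongr
    exact neg_cos_add_sin_le θ
  rw [angleRate_eq_rotated hx.ne' hy.ne']
  linarith

/- A contact with the barrier of `IsInitialArc.sin_sub_cos_le_barrier`, whose exponential is `E`. -/
theorem neg_angleRate_lt_of_sin_sub_cos_eq {r δ E : ℝ} (hr : 0 < r)
    (hra : r ^ 2 = 2 * a) (hδ : 0 < δ) (hδr : 6 * δ ≤ r) (hry : 5 / 6 * r ≤ y) (hyx : y ≤ x)
    (hxy : x - y ≤ δ) (hrate : angleRate a x y θ ≤ 0) (hE : 0 < E)
    (hE_one : x + y ≤ 3 * r → 1 ≤ E) (heq : sin θ - cos θ = 3 * δ / r * (1 + E)) :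
    -angleRate a x y θ < 6 * δ * E := by
  have ha : 0 ≤ a := by linarith [sq_nonneg r]
  have hy : 0 < y := by linarith
  have hN : 0 < sin θ - cos θ := by rw [heq]; positivity
  have hrN : r * (sin θ - cos θ) = 3 * δ * (1 + E) := by rw [heq]; field_simp
  rcases le_total (4 * a) (x * y) with hlarge | hsmall
  · exfalso
    have hbound := add_mul_sin_sub_cos_le ha hy hyx hlarge (by linarith) hrate
    have hmul : 5 / 3 * r * (sin θ - cos θ) ≤ (x + y) * (sin θ - cos θ) := by
      gcongr
      linarith
    linarith [mul_pos hδ hE]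
  · have hy_le : y ≤ 17 / 12 * r := by nlinarith
    have hsum : x + y ≤ 3 * r := by linarith
    have hbound := neg_angleRate_le ha hy hyx (by nlinarith) (by linarith)
    have hmul : (x + y) * (sin θ - cos θ) ≤ 3 * r * (sin θ - cos θ) := by gcongr
    have hδE : δ * 1 ≤ δ * E := by
      gcongr
      exact hE_one hsum
    linarith

end AngleRate

/-- `(x, y)` is a unit speed profile curve of a self-shrinker on the set of times `s`, with
tangent angle `θ`. The derivatives are two-sided, also at boundary points of `s`. -/
structure IsProfileCurve (a : ℝ) (x y θ : ℝ → ℝ) (s : Set ℝ) : Prop where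
  x_pos : ∀ t ∈ s, 0 < x t
  y_pos : ∀ t ∈ s, 0 < y t
  hasDerivAt_x : ∀ t ∈ s, HasDerivAt x (cos (θ t)) t
  hasDerivAt_y : ∀ t ∈ s, HasDerivAt y (sin (θ t)) t
  hasDerivAt_angle : ∀ t ∈ s, HasDerivAt θ (angleRate a (x t) (y t) (θ t)) t

namespace IsProfileCurve

variable {a : ℝ} {x y θ : ℝ → ℝ} {s s' : Set ℝ} {t b : ℝ}

theorem mono (h : IsProfileCurve a x y θ s) (hs : s' ⊆ s) : IsProfileCurve a x y θ s' :=
  ⟨fun t ht => h.x_pos t (hs ht), fun t ht => h.y_pos t (hs ht),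
    fun t ht => h.hasDerivAt_x t (hs ht), fun t ht => h.hasDerivAt_y t (hs ht),
    fun t ht => h.hasDerivAt_angle t (hs ht)⟩

theorem hasDerivAt_angleRate (h : IsProfileCurve a x y θ s) (ht : t ∈ s) :
    HasDerivAt (fun u => angleRate a (x u) (y u) (θ u))
      (a * (1 / x t ^ 2 - 1 / y t ^ 2) * (sin (θ t) * cos (θ t)) +
        ((x t / 2 - a / x t) * cos (θ t) - (a / y t - y t / 2) * sin (θ t)) *
          angleRate a (x t) (y t) (θ t)) t := by
  have hx := h.hasDerivAt_x t ht
  have hy := h.hasDerivAt_y t ht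
  have hθ := h.hasDerivAt_angle t ht
  have hx₀ := (h.x_pos t ht).ne'
  have hy₀ := (h.y_pos t ht).ne'
  have hsin := ((hx.div_const 2).sub ((hasDerivAt_const t a).div hx hx₀)).mul hθ.sin
  have hcos := (((hasDerivAt_const t a).div hy hy₀).sub (hy.div_const 2)).mul hθ.cos
  refine (hsin.add hcos).congr_deriv ?_
  simp only [Pi.sub_apply, Pi.div_apply]
  field_simp
  ring

theorem antitoneOn_angle (h : IsProfileCurve a x y θ (Icc 0 b))
    (hrate : ∀ t ∈ Ico 0 b, angleRate a (x t) (y t) (θ t) < 0) : AntitoneOn θ (Icc 0 b) :=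
  antitoneOn_of_hasDerivAt_nonpos (convex_Icc 0 b) h.hasDerivAt_angle fun t ht =>
    (hrate t (Ioo_subset_Ico_self (interior_Icc (a := (0 : ℝ)) ▸ ht))).le

theorem angle_notMem_Ioo_of_first_zero (h : IsProfileCurve a x y θ (Icc 0 b)) (ha : 0 < a)
    (hb : 0 < b) (hyx : y b < x b) (hrate : ∀ t ∈ Ico 0 b, angleRate a (x t) (y t) (θ t) < 0)
    (hzero : angleRate a (x b) (y b) (θ b) = 0) : θ b ∉ Ioo (-π) (-(π / 2)) := by
  rintro ⟨hθ₁, hθ₂⟩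
  have hb' : b ∈ Icc 0 b := right_mem_Icc.2 hb.le
  have hderiv := h.hasDerivAt_angleRate hb'
  rw [hzero, mul_zero, add_zero] at hderiv
  have hnonneg := deriv_nonneg_of_le_on_left hb hderiv fun t ht => by
    simpa only [hzero] using (hrate t (Ioo_subset_Ico_self ht)).le
  have hsin : sin (θ b) < 0 := sin_neg_of_neg_of_neg_pi_lt (by linarith [pi_pos]) hθ₁
  have hcos : cos (θ b) < 0 := by
    rw [← cos_neg]
    exact cos_neg_of_pi_div_two_lt_of_lt (by linarith) (by linarith [pi_pos])
  have hinv : 1 / x b ^ 2 - 1 / y b ^ 2 < 0 :=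
    sub_neg.2 <| one_div_lt_one_div_of_lt (pow_pos (h.y_pos b hb') 2)
      (pow_lt_pow_left₀ hyx (h.y_pos b hb').le two_ne_zero)
  exact hnonneg.not_gt <|
    mul_neg_of_neg_of_pos (mul_neg_of_pos_of_neg ha hinv) (mul_pos_of_neg_of_neg hsin hcos)

end IsProfileCurve

/-- A profile curve on `[0, T]` that leaves the diagonal orthogonally, stays weakly below it, and
turns clockwise to an angle of at least `-π`. -/
structure IsInitialArc (a : ℝ) (x y θ : ℝ → ℝ) (T : ℝ) : Prop
    extends IsProfileCurve a x y θ (Icc 0 T) where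
  nonneg : 0 ≤ T
  y_zero : y 0 = x 0
  angle_zero : θ 0 = -(π / 4)
  neg_pi_le_angle : -π ≤ θ T
  y_le_x : ∀ t ∈ Icc 0 T, y t ≤ x t
  rate_neg : ∀ t ∈ Ico 0 T, angleRate a (x t) (y t) (θ t) < 0

namespace IsInitialArc

variable {a : ℝ} {x y θ : ℝ → ℝ} {T s t : ℝ}

theorem x_zero_pos (h : IsInitialArc a x y θ T) : 0 < x 0 :=
  h.x_pos 0 (left_mem_Icc.2 h.nonneg)

theorem angle_mem_Icc (h : IsInitialArc a x y θ T) (ht : t ∈ Icc 0 T) :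
    θ t ∈ Icc (-π) (-(π / 4)) := by
  have hanti := h.antitoneOn_angle h.rate_neg
  exact ⟨h.neg_pi_le_angle.trans (hanti ht (right_mem_Icc.2 h.nonneg) ht.2),
    h.angle_zero ▸ hanti (left_mem_Icc.2 h.nonneg) ht ht.1⟩

theorem sin_angle_nonpos (h : IsInitialArc a x y θ T) (ht : t ∈ Icc 0 T) : sin (θ t) ≤ 0 :=
  have hθ := h.angle_mem_Icc ht
  sin_nonpos_of_nonpos_of_neg_pi_le (by linarith [hθ.2, pi_pos]) hθ.1

theorem cos_add_sin_angle_nonpos (h : IsInitialArc a x y θ T) (ht : t ∈ Icc 0 T) :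
    cos (θ t) + sin (θ t) ≤ 0 :=
  have hθ := h.angle_mem_Icc ht
  cos_add_sin_nonpos hθ.1 hθ.2

theorem hasDerivAt_add (h : IsInitialArc a x y θ T) (ht : t ∈ Icc 0 T) :
    HasDerivAt (fun u => x u + y u) (cos (θ t) + sin (θ t)) t :=
  (h.hasDerivAt_x t ht).add (h.hasDerivAt_y t ht)

theorem hasDerivAt_sub (h : IsInitialArc a x y θ T) (ht : t ∈ Icc 0 T) :
    HasDerivAt (fun u => x u - y u) (cos (θ t) - sin (θ t)) t :=
  (h.hasDerivAt_x t ht).sub (h.hasDerivAt_y t ht)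

theorem hasDerivAt_sin_sub_cos (h : IsInitialArc a x y θ T) (ht : t ∈ Icc 0 T) :
    HasDerivAt (fun u => sin (θ u) - cos (θ u))
      ((cos (θ t) + sin (θ t)) * angleRate a (x t) (y t) (θ t)) t :=
  ((h.hasDerivAt_angle t ht).sin.sub (h.hasDerivAt_angle t ht).cos).congr_deriv (by ring)

theorem antitoneOn_add (h : IsInitialArc a x y θ T) :
    AntitoneOn (fun t => x t + y t) (Icc 0 T) :=
  antitoneOn_of_hasDerivAt_nonpos (convex_Icc 0 T) (fun _ ht => h.hasDerivAt_add ht)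
    fun _ ht => h.cos_add_sin_angle_nonpos (interior_subset ht)

theorem antitoneOn_y (h : IsInitialArc a x y θ T) : AntitoneOn y (Icc 0 T) :=
  antitoneOn_of_hasDerivAt_nonpos (convex_Icc 0 T) h.hasDerivAt_y
    fun _ ht => h.sin_angle_nonpos (interior_subset ht)

/- As long as `x + y ≥ x 0` and `x - y` is small, `θ' ≤ -(x 0 / 8) (x - y)'`; so `-θ`
controls `x - y`, which keeps `x - y` small. -/
theorem sub_le_of_le_add (h : IsInitialArc a x y θ T) (ha : 0 ≤ a) (hq : 48 ≤ x 0)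
    (hqa : 64 * a ≤ x 0 ^ 2) (ht : t ∈ Icc 0 T) (hadd : x 0 ≤ x t + y t) :
    x t - y t ≤ 24 / x 0 := by
  have hq₀ := h.x_zero_pos
  have hsub : Icc 0 t ⊆ Icc 0 T := Icc_subset_Icc_right ht.2
  have hturn : ∀ s ∈ Icc 0 t, 10 / x 0 * (-(π / 4) - θ s) ≤ 24 / x 0 := fun s hs => by
    rw [div_mul_eq_mul_div]
    gcongr
    linarith [(h.angle_mem_Icc (hsub hs)).1, pi_lt_d2]
  refine (le_of_deriv_lt_of_eq (fun s hs => h.hasDerivAt_sub (hsub hs))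
    (fun s hs => ((h.hasDerivAt_angle s (hsub hs)).const_sub (-(π / 4))).const_mul (10 / x 0))
    ?_ (fun s hs heq => ?_) (right_mem_Icc.2 ht.1)).trans (hturn t (right_mem_Icc.2 ht.1))
  · simp only [h.y_zero, h.angle_zero, sub_self, mul_zero, le_refl]
  have hs' := hsub (Ico_subset_Icc_self hs)
  rcases le_or_gt (cos (θ s) - sin (θ s)) 0 with hB | hB
  · have hrate := neg_pos.2 (h.rate_neg s ⟨hs.1, hs.2.trans_le ht.2⟩)
    exact hB.trans_lt (by positivity)
  have hgap : x s - y s ≤ 1 := by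
    refine (heq.trans_le (hturn s (Ico_subset_Icc_self hs))).trans ?_
    rw [div_le_one hq₀]
    linarith
  have hadd_s : x 0 ≤ x s + y s := hadd.trans (h.antitoneOn_add hs' ht hs.2.le)
  have hyx := h.y_le_x s hs'
  have hrate : angleRate a (x s) (y s) (θ s) ≤ -(x 0 * (cos (θ s) - sin (θ s)) / 8) := by
    refine (angleRate_le ha (h.y_pos s hs') hyx (by nlinarith)
      (h.cos_add_sin_angle_nonpos hs') hB.le).trans ?_
    gcongr
  calc cos (θ s) - sin (θ s)
      < 10 / x 0 * (x 0 * (cos (θ s) - sin (θ s)) / 8) := by field_simp; linarith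
    _ ≤ 10 / x 0 * -angleRate a (x s) (y s) (θ s) := by gcongr; linarith

/- The arc is convex, so the points at times `0` and `t` lie on the same side of the tangent at
time `s`. In the coordinates `x + y`, `x - y` this bounds the slope of the arc beyond `s` by that
of the chord from the starting point. -/
theorem sub_le_two_mul_sub (h : IsInitialArc a x y θ T) (hs : s ∈ Icc 0 T) (ht : t ∈ Icc 0 T)
    (hst : s ≤ t) (hadd : x s + y s = x 0) : x t - y t ≤ 2 * (x s - y s) := by
  have hcross {u : ℝ} (hu : u ∈ Icc 0 T) :=
    tangent_cross_nonneg ordConnected_Icc h.hasDerivAt_x h.hasDerivAt_y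
      (h.antitoneOn_angle h.rate_neg) (fun v hv w hw => by
        linarith [(h.angle_mem_Icc hv).2, (h.angle_mem_Icc hw).1, pi_pos]) hs hu
  have hstart := hcross (left_mem_Icc.2 h.nonneg)
  have hend := hcross ht
  have hq := h.x_zero_pos
  have hadd_t := h.antitoneOn_add hs ht hst
  have hx := h.x_pos t ht
  have hy := h.y_pos t ht
  have hsin := h.sin_angle_nonpos hs
  have hgap := sub_nonneg.2 (h.y_le_x s hs)
  have hdrop : x s + y s - (x t + y t) ≤ x 0 := by linarith
  rw [h.y_zero] at hstart
  set A := -(cos (θ s) + sin (θ s)) with hA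
  set B := cos (θ s) - sin (θ s) with hB
  have hA₀ : 0 ≤ A := neg_nonneg.2 (h.cos_add_sin_angle_nonpos hs)
  have hchord : x 0 * B ≤ (x s - y s) * A := by
    rw [hA, hB]
    linear_combination 2 * hstart - (sin (θ s) - cos (θ s)) * hadd
  have htangent : (x t - y t - (x s - y s)) * A ≤ (x s + y s - (x t + y t)) * B := by
    rw [hA, hB]
    linear_combination 2 * hend
  have hA_pos : 0 < A := by
    refine hA₀.lt_of_ne fun hA_zero => ?_
    have hB_nonpos : B ≤ 0 := by
      rw [← hA_zero, mul_zero] at hchord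
      exact nonpos_of_mul_nonpos_right hchord hq
    nlinarith [sin_sq_add_cos_sq (θ s)]
  have hmul : (x t - y t - (x s - y s)) * A ≤ (x s - y s) * A := by
    rcases le_total 0 B with hB₀ | hB₀
    · exact htangent.trans ((mul_le_mul_of_nonneg_right hdrop hB₀).trans hchord)
    · exact htangent.trans <| (mul_nonpos_of_nonneg_of_nonpos (sub_nonneg.2 hadd_t) hB₀).trans
        (mul_nonneg hgap hA₀)
  linarith [le_of_mul_le_mul_right hmul hA_pos]

theorem sub_le (h : IsInitialArc a x y θ T) (ha : 0 ≤ a) (hq : 48 ≤ x 0)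
    (hqa : 64 * a ≤ x 0 ^ 2) (ht : t ∈ Icc 0 T) : x t - y t ≤ 48 / x 0 := by
  have hq₀ := h.x_zero_pos
  have htwo : 48 / x 0 = 2 * (24 / x 0) := by ring
  rw [htwo]
  rcases le_total (x 0) (x t + y t) with hadd | hadd
  · linarith [h.sub_le_of_le_add ha hq hqa ht hadd, div_pos (by norm_num : (0 : ℝ) < 24) hq₀]
  · have hsub : Icc 0 t ⊆ Icc 0 T := Icc_subset_Icc_right ht.2
    obtain ⟨s, hs, hadd_s⟩ := intermediate_value_Icc' ht.1
      (HasDerivAt.continuousOn fun u hu => h.hasDerivAt_add (hsub hu))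
      ⟨hadd, by linarith [h.y_zero]⟩
    linarith [h.sub_le_two_mul_sub (hsub hs) ht hs.2 hadd_s,
      h.sub_le_of_le_add ha hq hqa (hsub hs) hadd_s.ge]

theorem angleRate_neg_of_neg_pi_div_two_le (h : IsInitialArc a x y θ T) (ha : 0 ≤ a)
    (hq : 48 ≤ x 0) (hqa : 64 * a ≤ x 0 ^ 2) (hθ : -(π / 2) ≤ θ T) :
    angleRate a (x T) (y T) (θ T) < 0 := by
  have hT : T ∈ Icc 0 T := right_mem_Icc.2 h.nonneg
  have hcos : ∀ t ∈ Icc 0 T, 0 ≤ cos (θ t) := fun t ht =>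
    cos_nonneg_of_neg_pi_div_two_le_of_le
      (hθ.trans (h.antitoneOn_angle h.rate_neg ht hT ht.2))
      (by linarith [(h.angle_mem_Icc ht).2, pi_pos])
  have hx : x 0 ≤ x T :=
    monotoneOn_of_hasDerivAt_nonneg (convex_Icc 0 T) h.hasDerivAt_x
      (fun t ht => hcos t (interior_subset ht)) (left_mem_Icc.2 h.nonneg) hT h.nonneg
  have hgap : x T - y T ≤ 1 :=
    (h.sub_le ha hq hqa hT).trans ((div_le_one h.x_zero_pos).2 hq)
  have hsin : sin (θ T) < 0 :=
    sin_neg_of_neg_of_neg_pi_lt (by linarith [(h.angle_mem_Icc hT).2, pi_pos])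
      (by linarith [pi_pos])
  exact angleRate_neg_of_two_mul_lt_sq (h.x_pos T hT) (h.y_pos T hT) (by nlinarith)
    (by nlinarith) hsin (hcos T hT)

/- With `r = √(2a)`: as long as `y ≥ 5r/6`, the function `3δ/r * (1 + exp (2r (3r - (x + y))))` is
an upper barrier for `sin θ - cos θ`. For large `x + y` the sign of `θ'` alone keeps
`sin θ - cos θ` below `3δ/r`; the exponential absorbs the growth where `x + y ≤ 3r`. -/
theorem sin_sub_cos_le_barrier (h : IsInitialArc a x y θ T) {r δ : ℝ} (hr : 0 < r)
    (hra : r ^ 2 = 2 * a) (hδ : 0 < δ) (hδr : 6 * δ ≤ r)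
    (hgap : ∀ t ∈ Icc 0 T, x t - y t ≤ δ) (hry : 5 / 6 * r ≤ y T) :
    sin (θ T) - cos (θ T) ≤ 3 * δ / r * (1 + exp (2 * r * (3 * r - (x T + y T)))) := by
  have hT : T ∈ Icc 0 T := right_mem_Icc.2 h.nonneg
  refine le_of_deriv_lt_of_eq (fun t ht => h.hasDerivAt_sin_sub_cos ht)
    (fun t ht => (((((h.hasDerivAt_add ht).const_sub (3 * r)).const_mul (2 * r)).exp.const_add
      1).const_mul (3 * δ / r))) ?_ (fun t ht heq => ?_) hT
  · have hstart : sin (θ 0) - cos (θ 0) ≤ 0 := by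
      simp only [h.angle_zero, sin_neg, cos_neg, sin_pi_div_four, cos_pi_div_four]
      linarith [sqrt_nonneg 2]
    exact hstart.trans (by positivity)
  have ht' := Ico_subset_Icc_self ht
  set E := exp (2 * r * (3 * r - (x t + y t)))
  have hrate := neg_angleRate_lt_of_sin_sub_cos_eq hr hra hδ hδr
    (hry.trans (h.antitoneOn_y ht' hT ht'.2)) (h.y_le_x t ht') (hgap t ht')
    (h.rate_neg t ht).le (exp_pos _)
    (fun hsum => one_le_exp (mul_nonneg (by positivity) (sub_nonneg.2 hsum))) heq
  have hN : 0 < sin (θ t) - cos (θ t) := by rw [heq]; positivity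
  have hA : 0 < -(cos (θ t) + sin (θ t)) := by linarith [h.sin_angle_nonpos ht']
  calc (cos (θ t) + sin (θ t)) * angleRate a (x t) (y t) (θ t)
      = -(cos (θ t) + sin (θ t)) * -angleRate a (x t) (y t) (θ t) := by ring
    _ < -(cos (θ t) + sin (θ t)) * (6 * δ * E) := by gcongr
    _ = 3 * δ / r * (E * (2 * r * -(cos (θ t) + sin (θ t)))) := by field_simp; ring

theorem sq_lt_of_angle_eq_neg_pi (h : IsInitialArc a x y θ T) {δ : ℝ} (ha : 0 < a)
    (hδ : 0 < δ) (hδa : 3 * δ * (1 + exp (12 * a)) ≤ √(2 * a))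
    (hgap : ∀ t ∈ Icc 0 T, x t - y t ≤ δ) (hθ : θ T = -π) : x T ^ 2 < 2 * a := by
  by_contra! hx_sq
  have hT : T ∈ Icc 0 T := right_mem_Icc.2 h.nonneg
  have hr : 0 < √(2 * a) := by positivity
  have hra : √(2 * a) ^ 2 = 2 * a := sq_sqrt (by positivity)
  set r := √(2 * a)
  have hrx : r ≤ x T := (sqrt_le_left (h.x_pos T hT).le).2 hx_sq
  have hδr : 6 * δ ≤ r := by
    have hexp : 1 ≤ exp (12 * a) := one_le_exp (by positivity)
    nlinarith
  have hbarrier := h.sin_sub_cos_le_barrier hr hra hδ hδr hgap (by linarith [hgap T hT])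
  have hexp : exp (2 * r * (3 * r - (x T + y T))) < exp (12 * a) := by
    rw [exp_lt_exp]
    nlinarith [h.x_pos T hT, h.y_pos T hT]
  have hlt : 3 * δ / r * (1 + exp (2 * r * (3 * r - (x T + y T)))) < 1 :=
    calc 3 * δ / r * (1 + exp (2 * r * (3 * r - (x T + y T))))
        < 3 * δ / r * (1 + exp (12 * a)) := by gcongr
      _ ≤ 1 := by rwa [div_mul_eq_mul_div, div_le_one hr]
  rw [hθ, sin_neg, cos_neg, sin_pi, cos_pi] at hbarrier
  linarith

end IsInitialArc

theorem IsProfileCurve.angleRate_neg_of_sq_lt {a b t : ℝ} {x y θ : ℝ → ℝ}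
    (h : IsProfileCurve a x y θ (Icc t b)) (htb : t ≤ b) (hθ : AntitoneOn θ (Icc t b))
    (hθt : θ t = -π) (hθb : -(3 * π / 2) ≤ θ b) (hyx : y b < x b) (hx : x t ^ 2 < 2 * a) :
    angleRate a (x b) (y b) (θ b) < 0 := by
  have ht : t ∈ Icc t b := left_mem_Icc.2 htb
  have hb : b ∈ Icc t b := right_mem_Icc.2 htb
  have hle : ∀ s ∈ Icc t b, θ s ≤ -π := fun s hs => hθt ▸ hθ ht hs hs.1
  have hcos : ∀ s ∈ Icc t b, cos (θ s) ≤ 0 := fun s hs =>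
    cos_nonpos_of_le_neg_pi_div_two (hθb.trans (hθ hs hb hs.2)) (by linarith [hle s hs, pi_pos])
  have hsin : 0 ≤ sin (θ b) := by
    rw [← sin_add_two_pi]
    exact sin_nonneg_of_nonneg_of_le_pi (by linarith [pi_pos]) (by linarith [hle b hb])
  have hxb : x b ≤ x t :=
    antitoneOn_of_hasDerivAt_nonpos (convex_Icc t b) h.hasDerivAt_x
      (fun s hs => hcos s (interior_subset hs)) ht hb htb
  have hx_pos := h.x_pos b hb
  have hy_pos := h.y_pos b hb
  have hx_sq : x b ^ 2 < 2 * a := (pow_le_pow_left₀ hx_pos.le hxb 2).trans_lt hx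
  have hy_sq : y b ^ 2 < 2 * a := (pow_le_pow_left₀ hy_pos.le hyx.le 2).trans_lt hx_sq
  exact angleRate_neg_of_sq_lt_two_mul hx_pos hy_pos hx_sq hy_sq hsin (hcos b hb)

theorem IsProfileCurve.angleRate_ne_zero_of_first_zero {a b : ℝ} {x y θ : ℝ → ℝ}
    (h : IsProfileCurve a x y θ (Icc 0 b)) (ha : 0 < a) (hb : 0 < b) (hq : 48 ≤ x 0)
    (hqa : 64 * a ≤ x 0 ^ 2) (hqr : 144 * (1 + exp (12 * a)) ≤ √(2 * a) * x 0)
    (hy₀ : y 0 = x 0) (hθ₀ : θ 0 = -(π / 4)) (hθ : -(3 * π / 2) ≤ θ b)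
    (hyx : ∀ t ∈ Ioc 0 b, y t < x t)
    (hrate : ∀ t ∈ Ico 0 b, angleRate a (x t) (y t) (θ t) < 0) :
    angleRate a (x b) (y b) (θ b) ≠ 0 := by
  intro hzero
  have hb' : b ∈ Icc 0 b := right_mem_Icc.2 hb.le
  have harc : ∀ T ∈ Icc 0 b, -π ≤ θ T → IsInitialArc a x y θ T := fun T hT hθT =>
    { h.mono (Icc_subset_Icc_right hT.2) with
      nonneg := hT.1
      y_zero := hy₀
      angle_zero := hθ₀
      neg_pi_le_angle := hθT
      y_le_x := fun t ht => ht.1.eq_or_lt.elim (fun h => h ▸ hy₀.le)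
        fun h => (hyx t ⟨h, ht.2.trans hT.2⟩).le
      rate_neg := fun t ht => hrate t ⟨ht.1, ht.2.trans_le hT.2⟩ }
  rcases le_or_gt (-(π / 2)) (θ b) with hθ_right | hθ_left
  · exact ((harc b hb' (by linarith [pi_pos])).angleRate_neg_of_neg_pi_div_two_le
      ha.le hq hqa hθ_right).ne hzero
  have hθ_pi : θ b ≤ -π := by
    by_contra! hθ_pi
    exact h.angle_notMem_Ioo_of_first_zero ha hb (hyx b ⟨hb, le_rfl⟩) hrate hzero
      ⟨hθ_pi, hθ_left⟩
  obtain ⟨T, hT, hθT⟩ := intermediate_value_Icc' hb.le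
    (HasDerivAt.continuousOn h.hasDerivAt_angle) ⟨hθ_pi, by linarith [pi_pos]⟩
  have hsub : Icc T b ⊆ Icc 0 b := Icc_subset_Icc_left hT.1
  have hq₀ := (harc T hT hθT.ge).x_zero_pos
  have hδ : 3 * (48 / x 0) * (1 + exp (12 * a)) ≤ √(2 * a) := by
    rw [mul_div_assoc', div_mul_eq_mul_div, div_le_iff₀ hq₀]
    linarith
  have hx : x T ^ 2 < 2 * a := (harc T hT hθT.ge).sq_lt_of_angle_eq_neg_pi ha (by positivity) hδ
    (fun t ht => (harc T hT hθT.ge).sub_le ha.le hq hqa ht) hθT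
  exact ((h.mono hsub).angleRate_neg_of_sq_lt hT.2 ((h.antitoneOn_angle hrate).mono hsub) hθT hθ
    (hyx b ⟨hb, le_rfl⟩) hx).ne hzero

theorem IsProfileCurve.angleRate_neg {a t : ℝ} {x y θ : ℝ → ℝ}
    (h : IsProfileCurve a x y θ (Icc 0 t)) (ha : 0 < a) (ht : 0 ≤ t) (hq : 48 ≤ x 0)
    (hqa : 64 * a ≤ x 0 ^ 2) (hqr : 144 * (1 + exp (12 * a)) ≤ √(2 * a) * x 0)
    (hy₀ : y 0 = x 0) (hθ₀ : θ 0 = -(π / 4)) (hθ : ∀ τ ∈ Icc 0 t, -(3 * π / 2) ≤ θ τ)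
    (hyx : ∀ τ ∈ Ioc 0 t, y τ < x τ) : angleRate a (x t) (y t) (θ t) < 0 := by
  by_contra! hrate
  have hstart : angleRate a (x 0) (y 0) (θ 0) < 0 := by
    have hsqrt : 0 < √2 / 2 := by positivity
    rw [hy₀, hθ₀]
    exact angleRate_neg_of_two_mul_lt_sq (by linarith) (by linarith) (by nlinarith)
      (by nlinarith) (by rw [sin_neg, sin_pi_div_four]; linarith)
      (by rw [cos_neg, cos_pi_div_four]; exact hsqrt.le)
  obtain ⟨b, hb, hzero, hneg⟩ := exists_first_zero ht
    (HasDerivAt.continuousOn fun _ => h.hasDerivAt_angleRate) hstart hrate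
  exact (h.mono (Icc_subset_Icc_right hb.2)).angleRate_ne_zero_of_first_zero ha hb.1 hq hqa hqr
    hy₀ hθ₀ (hθ b ⟨hb.1.le, hb.2⟩) (fun τ hτ => hyx τ ⟨hτ.1, hτ.2.trans hb.2⟩) hneg hzero

theorem monotonicity_of_angle_general {a : ℝ} (ha : 0 < a) :
    ∃ R₀ > (0 : ℝ), ∀ R ≥ R₀, ∀ (t : ℝ) (x y θ : ℝ → ℝ), 0 ≤ t →
      IsProfileCurve a x y θ (Icc 0 t) → x 0 = R / √2 → y 0 = R / √2 → θ 0 = -(π / 4) →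
      (∀ τ ∈ Icc 0 t, -(3 * π / 2) ≤ θ τ) → (∀ τ ∈ Ioc 0 t, y τ < x τ) →
      angleRate a (x t) (y t) (θ t) < 0 := by
  have hr : 0 < √(2 * a) := by positivity
  have hq : Filter.Tendsto (fun R : ℝ => R / √2) Filter.atTop Filter.atTop :=
    Filter.tendsto_id.atTop_div_const (by positivity)
  have hlarge : ∀ᶠ q : ℝ in Filter.atTop,
      48 ≤ q ∧ 64 * a ≤ q ^ 2 ∧ 144 * (1 + exp (12 * a)) ≤ √(2 * a) * q :=
    (Filter.eventually_ge_atTop 48).and <|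
      ((Filter.tendsto_pow_atTop two_ne_zero).eventually_ge_atTop _).and
        ((Filter.tendsto_id.const_mul_atTop hr).eventually_ge_atTop _)
  obtain ⟨R₀, hR₀⟩ := Filter.eventually_atTop.1 (hq.eventually hlarge)
  refine ⟨max R₀ 1, by positivity, fun R hR t x y θ ht h hx₀ hy₀ hθ₀ hθ hyx => ?_⟩
  obtain ⟨h₁, h₂, h₃⟩ := hR₀ R (le_of_max_le_left hR)
  rw [← hx₀] at h₁ h₂ h₃
  exact h.angleRate_neg ha ht h₁ h₂ h₃ (hy₀.trans hx₀.symm) hθ₀ hθ hyx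

theorem ShootingSol.isProfileCurve {n : ℕ} {R T t : ℝ} {x y θ : ℝ → ℝ}
    (h : ShootingSol n R T x y θ) (ht : t < T) : IsProfileCurve (n - 1) x y θ (Icc 0 t) :=
  have hsol := fun s (hs : s ∈ Icc 0 t) => h.2.2.2.2 s ⟨hs.1, hs.2.trans_lt ht⟩
  ⟨fun s hs => (hsol s hs).1, fun s hs => (hsol s hs).2.1, fun s hs => (hsol s hs).2.2.1,
    fun s hs => (hsol s hs).2.2.2.1, fun s hs => (hsol s hs).2.2.2.2⟩

/-- monotonicity lemma: there is `R₀ > 0` such that for every `R ≥ R₀`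
the angle `θ_R` of the shooting solution is strictly decreasing (`θ_R'(t) < 0`, where
`θ_R'` is the right-hand side of the third equation) at every time `t` such that
`θ_R > −5π/4` on `[0, t]` and `x_R > y_R` on `(0, t]`. -/
theorem monotonicity_of_angle (n : ℕ) (hn : 2 ≤ n) :
    ∃ R₀ > (0 : ℝ), ∀ R ≥ R₀, ∀ (T : ℝ) (x y θ : ℝ → ℝ),
      ShootingSol n R T x y θ →
      ∀ t ∈ Set.Ico 0 T,
        (∀ τ ∈ Set.Icc 0 t, -(5 * Real.pi / 4) < θ τ) →
        (∀ τ ∈ Set.Ioc 0 t, y τ < x τ) →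
        (x t / 2 - ((n : ℝ) - 1) / x t) * Real.sin (θ t)
          + (((n : ℝ) - 1) / y t - y t / 2) * Real.cos (θ t) < 0 := by
  obtain ⟨R₀, hR₀, hneg⟩ := monotonicity_of_angle_general (a := (n : ℝ) - 1)
    (sub_pos.2 (by exact_mod_cast hn))
  refine ⟨R₀, hR₀, fun R hR T x y θ h t ht hθ hyx => ?_⟩
  exact hneg R hR t x y θ ht.1 (h.isProfileCurve ht.2) h.2.1 h.2.2.1 h.2.2.2.1
    (fun τ hτ => by linarith [hθ τ hτ, Real.pi_pos]) hyx
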